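/- Fix constants C_{β₀}, C_u, C₁, C₂, C_η, c_η > 0 with C_η > c_η and c_η < √((1/2)·min{τ², (1−τ)²}). Let (β₀*, M_u*, ρ₁*) denote the unique minimizing triple of the asymptotic program min over (|β₀| ≤ C_{β₀}, 0 ≤ M_u ≤ C_u, 0 ≤ ρ₁ ≤ C₁) of max over (0 < ρ₂ ≤ C₂, c_η ≤ M_η ≤ C_η) of A, and suppose M_u* > 0. Then the maximization over M_η in the asymptotic program has a unique solution; that is, the function M_η ↦ max_{0 < ρ₂ ≤ C₂} min over (|β₀| ≤ C_{β₀}, 0 ≤ M_u ≤ C_u, 0 ≤ ρ₁ ≤ C₁) of A(β₀, M_u, ρ₁, M_η, ρ₂) attains its maximum over [c_η, C_η] at a unique point. -/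

import Mathlib

open MeasureTheory ProbabilityTheory Filter Finset

noncomputable section

/-- The pinball (quantile) loss `ℓ_τ(r) = τ·r − min{r, 0}`. -/
def pinball (τ r : ℝ) : ℝ := τ * r - min r 0

/-- The Moreau envelope of a scalar function, `e_f(x; ρ) = inf_v (x − v)²/(2ρ) + f(v)` for
`ρ > 0`, continuously extended by `e_f(x; 0) = f(x)`. -/
def moreau (f : ℝ → ℝ) (x ρ : ℝ) : ℝ :=
  if ρ = 0 then f x else ⨅ v : ℝ, ((x - v) ^ 2 / (2 * ρ) + f v)

/-- The convex (Fenchel) conjugate of a scalar function, with values in `EReal`. -/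
def conjE (f : ℝ → ℝ) (x : ℝ) : EReal := ⨆ v : ℝ, ((v * x - f v : ℝ) : EReal)

/-- The Moreau envelope of the convex conjugate `f*` of a scalar function `f`. -/
def moreauConj (f : ℝ → ℝ) (x ρ : ℝ) : ℝ :=
  (⨅ v : ℝ, ((((x - v) ^ 2 / (2 * ρ) : ℝ) : EReal) + conjE f v)).toReal

/-- Assumptions on the noise distribution `P_ε`: mean zero, finite second moment and a bounded,
continuous density that is positive on all of `ℝ` (hence, in particular, continuous). -/
structure NoiseAssumption (Pε : Measure ℝ) : Prop where
  mean_zero : ∫ x, x ∂Pε = 0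
  second_moment : Integrable (fun x => x ^ 2) Pε
  density : ∃ f : ℝ → ℝ, Continuous f ∧ (∀ x, 0 < f x) ∧ (∃ C, ∀ x, f x ≤ C) ∧
    Pε = volume.withDensity fun x => ENNReal.ofReal (f x)

/-- The deterministic asymptotic objective
`A(β₀, M_u, ρ₁, M_η, ρ₂) = E[e_{ℓ_τ}(M_u g₁ + ε₁ − β₀; ρ₁/M_η)] − M_η² M_u γ/(2ρ₂)
  + γ E[e_ν((M_η M_u/ρ₂) h₁ + γ √d β̃₁; M_u/ρ₂)] + M_η ρ₁/2 − M_u ρ₂/2`,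
where `(g₁, ε₁) ∼ N(0,1) ⊗ P_ε` and `(h₁, √d β̃₁) ∼ N(0,1) ⊗ P_β`. -/
def asymObj (τ γ : ℝ) (Pε Pβ : Measure ℝ) (ν : ℝ → ℝ) (β₀ Mu ρ₁ Mη ρ₂ : ℝ) : ℝ :=
  (∫ z, moreau (pinball τ) (Mu * z.1 + z.2 - β₀) (ρ₁ / Mη) ∂((gaussianReal 0 1).prod Pε))
    - Mη ^ 2 * Mu * γ / (2 * ρ₂)
    + γ * (∫ z, moreau ν (Mη * Mu / ρ₂ * z.1 + γ * z.2) (Mu / ρ₂)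
        ∂((gaussianReal 0 1).prod Pβ))
    + Mη * ρ₁ / 2 - Mu * ρ₂ / 2

/-- The inner maximum of the asymptotic objective over `M_η ∈ [c_η, C_η]` and `ρ₂ ∈ (0, C₂]`,
as a function of `(β₀, M_u, ρ₁)`. -/
def asymFmax (τ γ : ℝ) (Pε Pβ : Measure ℝ) (ν : ℝ → ℝ) (cη Cη C₂ : ℝ)
    (p : ℝ × ℝ × ℝ) : ℝ :=
  sSup ((fun q : ℝ × ℝ => asymObj τ γ Pε Pβ ν p.1 p.2.1 p.2.2 q.1 q.2) ''
    (Set.Icc cη Cη ×ˢ Set.Ioc (0 : ℝ) C₂))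

/-- The constraint box `{|β₀| ≤ C_{β₀}} × {0 ≤ M_u ≤ C_u} × {0 ≤ ρ₁ ≤ C₁}` of the outer
minimization of the asymptotic program. -/
def asymBox (Cβ0 Cu C₁ : ℝ) : Set (ℝ × ℝ × ℝ) :=
  Set.Icc (-Cβ0) Cβ0 ×ˢ Set.Icc (0 : ℝ) Cu ×ˢ Set.Icc (0 : ℝ) C₁

/-- Parts (v) and (vi) of the regularizer assumption, stated for the limiting scalar penalty `ν`:
there exist a.e. first and second derivatives `D1, D2` of `x ↦ e_{ν*}(x; ρ)` satisfying the
differentiation-under-the-integral / Stein identities, and the expected second derivative is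
bounded away from zero on compacts. -/
def ConjDerivAssumption (γ : ℝ) (Pβ : Measure ℝ) (ν : ℝ → ℝ) : Prop :=
  ∃ D1 D2 : ℝ → ℝ → ℝ,
    (∀ ρ > (0 : ℝ),
      (∀ᵐ x ∂(volume : Measure ℝ), HasDerivAt (fun t => moreauConj ν t ρ) (D1 x ρ) x) ∧
      (∀ᵐ x ∂(volume : Measure ℝ), HasDerivAt (fun t => D1 t ρ) (D2 x ρ) x) ∧
      (∀ c : ℝ,
        HasDerivAt (fun c' => ∫ z, moreauConj ν (c' * z.1 + ρ * γ * z.2) ρ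
            ∂((gaussianReal 0 1).prod Pβ))
          (∫ z, z.1 * D1 (c * z.1 + ρ * γ * z.2) ρ ∂((gaussianReal 0 1).prod Pβ)) c ∧
        (∫ z, z.1 * D1 (c * z.1 + ρ * γ * z.2) ρ ∂((gaussianReal 0 1).prod Pβ))
          = c * ∫ z, D2 (c * z.1 + ρ * γ * z.2) ρ ∂((gaussianReal 0 1).prod Pβ))) ∧
    (∀ A : Set ℝ, IsCompact A → A ⊆ Set.Ioi 0 → ∀ Cρ > (0 : ℝ), ∃ m > (0 : ℝ),
      ∀ c ∈ A, ∀ ρ ∈ Set.Ioc (0 : ℝ) Cρ,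
        m ≤ ∫ z, D2 (c * z.1 + ρ * γ * z.2) ρ ∂((gaussianReal 0 1).prod Pβ))

/-- The outer function of the `M_η`-maximization:
`G(M_η) = max_{ρ₂ ∈ (0,C₂]} min_{(β₀,M_u,ρ₁) ∈ box} A(β₀, M_u, ρ₁, M_η, ρ₂)`. -/
def asymG (τ γ : ℝ) (Pε Pβ : Measure ℝ) (ν : ℝ → ℝ) (Cβ0 Cu C₁ C₂ : ℝ) (Mη : ℝ) : ℝ :=
  sSup ((fun ρ₂ =>
      sInf ((fun p : ℝ × ℝ × ℝ => asymObj τ γ Pε Pβ ν p.1 p.2.1 p.2.2 Mη ρ₂) ''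
        asymBox Cβ0 Cu C₁)) '' Set.Ioc (0 : ℝ) C₂)

theorem abstract_unique {E : Type*} [TopologicalSpace E] [AddCommGroup E] [Module ℝ E]
    [IsTopologicalAddGroup E] [ContinuousSMul ℝ E]
    (X : Set E) (hXc : IsCompact X) (hXv : Convex ℝ X) (hXn : X.Nonempty)
    (a b c : ℝ) (hab : a < b) (hc : 0 < c) (f : E → ℝ × ℝ → ℝ)
    (hcy : ∀ x ∈ X, ContinuousOn (f x) (Set.Icc a b ×ˢ Set.Ioc (0 : ℝ) c))
    (hvy : ∀ x ∈ X, ConcaveOn ℝ (Set.Icc a b ×ˢ Set.Ioc (0 : ℝ) c) (f x))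
    (hcx : ∀ y ∈ Set.Icc a b ×ˢ Set.Ioc (0 : ℝ) c, ContinuousOn (fun x => f x y) X)
    (hvx : ∀ y ∈ Set.Icc a b ×ˢ Set.Ioc (0 : ℝ) c, ConvexOn ℝ X (fun x => f x y))
    (hbd : ∀ x ∈ X, BddAbove (f x '' (Set.Icc a b ×ˢ Set.Ioc (0 : ℝ) c)))
    (hst : ∀ x ∈ X,
      IsMinOn (fun x => sSup (f x '' (Set.Icc a b ×ˢ Set.Ioc (0 : ℝ) c))) X x →
      ∀ M1 ∈ Set.Icc a b, ∀ M2 ∈ Set.Icc a b, M1 < M2 → ∀ V : ℝ,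
      (∀ y ∈ Set.Icc a b ×ˢ Set.Ioc (0 : ℝ) c, f x y ≤ V) →
      (∀ ε > 0, ∃ ρ ∈ Set.Ioc (0 : ℝ) c, V - ε < f x (M1, ρ)) →
      (∀ ε > 0, ∃ ρ ∈ Set.Ioc (0 : ℝ) c, V - ε < f x (M2, ρ)) → False) :
    ∃! M : ℝ, M ∈ Set.Icc a b ∧
      IsMaxOn (fun M => sSup ((fun ρ => sInf ((fun x => f x (M, ρ)) '' X)) '' Set.Ioc (0 : ℝ) c))
        (Set.Icc a b) M := by
  set Y := Set.Icc a b ×ˢ Set.Ioc (0 : ℝ) c with hY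
  set m : ℝ × ℝ → ℝ := fun y => sInf ((fun x => f x y) '' X) with hm
  set Fm : E → ℝ := fun x => sSup (f x '' Y) with hFm
  set G : ℝ → ℝ := fun M => sSup ((fun ρ => sInf ((fun x => f x (M, ρ)) '' X)) '' Set.Ioc (0 : ℝ) c)
    with hG
  have hYn : Y.Nonempty := ⟨(a, c), ⟨⟨le_rfl, hab.le⟩, hc, le_rfl⟩⟩
  have hYv : Convex ℝ Y := (convex_Icc a b).prod (convex_Ioc 0 c)
  have hmle : ∀ y ∈ Y, ∀ x ∈ X, m y ≤ f x y := fun y hy x hx =>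
    csInf_le (hXc.bddBelow_image (hcx y hy)) ⟨x, hx, rfl⟩
  have hlem : ∀ y ∈ Y, ∀ t, (∀ x ∈ X, t ≤ f x y) → t ≤ m y := fun y hy t ht =>
    le_csInf (hXn.image _) (by rintro _ ⟨x, hx, rfl⟩; exact ht x hx)
  have hleF : ∀ x ∈ X, ∀ y ∈ Y, f x y ≤ Fm x := fun x hx y hy =>
    le_csSup (hbd x hx) ⟨y, hy, rfl⟩
  have hlsc : LowerSemicontinuousOn Fm X := by
    intro x hx t ht
    obtain ⟨_, ⟨y, hy, rfl⟩, hty⟩ := exists_lt_of_lt_csSup (hYn.image (f x)) ht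
    have h1 := (hcx y hy) x hx
    have h2 := h1.eventually (lt_mem_nhds hty)
    filter_upwards [h2, self_mem_nhdsWithin] with x' hx' hx'X
    exact lt_of_lt_of_le hx' (hleF x' hx'X y hy)
  obtain ⟨xs, hxs, hxsmin⟩ := hlsc.exists_isMinOn hXn hXc
  have hmb : ∀ y ∈ Y, m y ≤ Fm xs := fun y hy => (hmle y hy xs hxs).trans (hleF xs hxs y hy)
  have hbm : BddAbove (m '' Y) := ⟨Fm xs, by rintro _ ⟨y, hy, rfl⟩; exact hmb y hy⟩
  have hmm : Fm xs = sSup (m '' Y) := by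
    refine Sion.minimax hXn hXc (fun y hy => (hcx y hy).lowerSemicontinuousOn)
      (fun y hy => (hvx y hy).quasiconvexOn) hYv (fun x hx => (hcy x hx).upperSemicontinuousOn)
      (fun x hx => (hvy x hx).quasiconcaveOn) hXv Fm ?_ _ ?_ m ?_ _ ?_
    · intro x hx
      exact isLUB_csSup (hYn.image (f x)) (hbd x hx)
    · constructor
      · rintro _ ⟨x, hx, rfl⟩; exact hxsmin hx
      · intro t ht; exact ht ⟨xs, hxs, rfl⟩
    · intro y hy
      exact isGLB_csInf (hXn.image (fun x => f x y)) (hXc.bddBelow_image (hcx y hy))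
    · exact isLUB_csSup (hYn.image m) hbm
  set V := Fm xs with hV
  have hGle : ∀ M ∈ Set.Icc a b, G M ≤ V := fun M hM =>
    csSup_le ((Set.nonempty_Ioc.2 hc).image _) (by
      rintro _ ⟨ρ, hρ, rfl⟩; exact hmb (M, ρ) ⟨hM, hρ⟩)
  have hmG : ∀ M ∈ Set.Icc a b, ∀ ρ ∈ Set.Ioc (0 : ℝ) c, m (M, ρ) ≤ G M := fun M hM ρ hρ =>
    le_csSup ⟨V, by rintro _ ⟨ρ, hρ, rfl⟩; exact hmb (M, ρ) ⟨hM, hρ⟩⟩ ⟨ρ, hρ, rfl⟩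
  have hex : ∃ M ∈ Set.Icc a b, V ≤ G M := by
    have h1 : ∀ n : ℕ, ∃ y ∈ Y, V - 1 / ((n : ℝ) + 1) < m y := by
      intro n
      have : V - 1 / ((n : ℝ) + 1) < sSup (m '' Y) := by
        rw [← hmm]; linarith [Nat.one_div_pos_of_nat (α := ℝ) (n := n)]
      obtain ⟨_, ⟨y, hy, rfl⟩, hty⟩ := exists_lt_of_lt_csSup (hYn.image m) this
      exact ⟨y, hy, hty⟩
    choose y hyY hym using h1
    have hcomp : IsCompact (Set.Icc a b ×ˢ Set.Icc (0 : ℝ) c) := isCompact_Icc.prod isCompact_Icc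
    obtain ⟨⟨M, r⟩, ⟨hM, hr⟩, φ, hφ, hlim⟩ := hcomp.tendsto_subseq
      (x := y) (fun n => ⟨(hyY n).1, Set.Ioc_subset_Icc_self (hyY n).2⟩)
    refine ⟨M, hM, ?_⟩
    have hMc : (M, c) ∈ Y := ⟨hM, hc, le_rfl⟩
    have key : ∀ θ ∈ Set.Ioo (0 : ℝ) 1, (1 - θ) * V + θ * m (M, c) ≤ G M := by
      intro θ hθ
      have hz : (M, (1 - θ) * r + θ * c) ∈ Y := by
        refine ⟨hM, ?_, ?_⟩
        · have := mul_nonneg (sub_nonneg.2 hθ.2.le) hr.1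
          have := mul_pos hθ.1 hc
          simp only; linarith
        · have := mul_le_mul_of_nonneg_left hr.2 (sub_nonneg.2 hθ.2.le)
          simp only; linarith
      refine le_trans (hlem _ hz _ ?_) (hmG M hM _ hz.2)
      intro x hx
      have hzn : ∀ n, (1 - θ) • y (φ n) + θ • (M, c) ∈ Y := fun n =>
        hYv (hyY _) hMc (sub_nonneg.2 hθ.2.le) hθ.1.le (by ring)
      have hl1 : Tendsto (fun n => (1 - θ) • y (φ n) + θ • (M, c)) atTop
          (nhdsWithin (M, (1 - θ) * r + θ * c) Y) := by
        refine tendsto_nhdsWithin_iff.2 ⟨?_, Eventually.of_forall hzn⟩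
        have : (M, (1 - θ) * r + θ * c) = (1 - θ) • (M, r) + θ • (M, c) := by
          ext <;> simp; ring
        rw [this]
        exact (hlim.const_smul _).add_const _
      have hl2 := ((hcy x hx) _ hz).tendsto.comp hl1
      have hl3 : Tendsto (fun n : ℕ => (1 - θ) * (V - 1 / (((φ n : ℕ) : ℝ) + 1)) + θ * m (M, c)) atTop
          (nhds ((1 - θ) * (V - 0) + θ * m (M, c))) := by
        refine Tendsto.add_const _ (Tendsto.const_mul _ (Tendsto.const_sub _ ?_))
        exact (tendsto_one_div_add_atTop_nhds_zero_nat (𝕜 := ℝ)).comp hφ.tendsto_atTop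
      rw [sub_zero] at hl3
      refine le_of_tendsto_of_tendsto' hl3 hl2 ?_
      intro n
      have h2 := (hvy x hx).2 (hyY (φ n)) hMc (sub_nonneg.2 hθ.2.le) hθ.1.le (by ring)
      simp only [smul_eq_mul] at h2
      refine le_trans ?_ h2
      have h3 := (hym (φ n)).le.trans (hmle _ (hyY (φ n)) x hx)
      have h4 := hmle _ hMc x hx
      exact add_le_add (mul_le_mul_of_nonneg_left h3 (sub_nonneg.2 hθ.2.le))
        (mul_le_mul_of_nonneg_left h4 hθ.1.le)
    have hl : Tendsto (fun θ : ℝ => (1 - θ) * V + θ * m (M, c)) (nhdsWithin 0 (Set.Ioi 0))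
        (nhds ((1 - 0) * V + 0 * m (M, c))) := by
      apply Tendsto.mono_left _ nhdsWithin_le_nhds
      exact (by fun_prop : Continuous (fun θ : ℝ => (1 - θ) * V + θ * m (M, c))).tendsto 0
    simp only [sub_zero, one_mul, zero_mul, add_zero] at hl
    refine le_of_tendsto hl ?_
    filter_upwards [Ioo_mem_nhdsGT (zero_lt_one' ℝ)] with θ hθ using key θ hθ
  obtain ⟨M, hM, hVM⟩ := hex
  have hap : ∀ M ∈ Set.Icc a b, V ≤ G M → ∀ ε > 0, ∃ ρ ∈ Set.Ioc (0 : ℝ) c, V - ε < f xs (M, ρ) := by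
    intro M hM hVM ε hε
    have : V - ε < G M := by linarith
    obtain ⟨_, ⟨ρ, hρ, rfl⟩, h⟩ := exists_lt_of_lt_csSup ((Set.nonempty_Ioc.2 hc).image _) this
    exact ⟨ρ, hρ, lt_of_lt_of_le h (hmle (M, ρ) ⟨hM, hρ⟩ xs hxs)⟩
  refine ⟨M, ⟨hM, fun M' hM' => (hGle M' hM').trans hVM⟩, ?_⟩
  rintro M' ⟨hM', hmax⟩
  have hVM' : V ≤ G M' := hVM.trans (hmax hM)
  rcases lt_trichotomy M' M with h | h | h
  · exact (hst xs hxs hxsmin M' hM' M hM h V (hleF xs hxs) (hap _ hM' hVM') (hap _ hM hVM)).elim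
  · exact h
  · exact (hst xs hxs hxsmin M hM M' hM' h V (hleF xs hxs) (hap _ hM hVM) (hap _ hM' hVM')).elim

theorem moreau_of_pos {f : ℝ → ℝ} {x ρ : ℝ} (hρ : 0 < ρ) :
    moreau f x ρ = ⨅ v : ℝ, ((x - v) ^ 2 / (2 * ρ) + f v) := by
  unfold moreau; rw [if_neg hρ.ne']

theorem moreau_zero (f : ℝ → ℝ) (x : ℝ) : moreau f x 0 = f x := by
  unfold moreau; rw [if_pos rfl]

/-- Existence of an affine minorant. -/
def HasMinorant (f : ℝ → ℝ) : Prop := ∃ a b : ℝ, ∀ v, a * v + b ≤ f v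

theorem HasMinorant.coercive {f : ℝ → ℝ} (hf : HasMinorant f) (x : ℝ) {ρ : ℝ} (hρ : 0 < ρ) :
    ∃ C : ℝ, ∀ v, |v| - C ≤ (x - v) ^ 2 / (2 * ρ) + f v := by
  obtain ⟨a, b, h⟩ := hf
  refine ⟨(|a| + 1) * |x| + ρ * (|a| + 1) ^ 2 / 2 - b, fun v => ?_⟩
  have h1 : (|a| + 1) * |x - v| - ρ * (|a| + 1) ^ 2 / 2 ≤ (x - v) ^ 2 / (2 * ρ) := by
    rw [le_div_iff₀ (by positivity), ← sq_abs (x - v)]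
    nlinarith [sq_nonneg (|x - v| - ρ * (|a| + 1))]
  have h2 : |v| - |x| ≤ |x - v| := by
    rw [abs_sub_comm]; exact abs_sub_abs_le_abs_sub v x
  have h3 : -(|a| * |v|) ≤ a * v := by rw [← abs_mul]; exact neg_abs_le _
  have h4 := h v
  have h5 := mul_le_mul_of_nonneg_left h2 (by positivity : 0 ≤ |a| + 1)
  nlinarith

theorem HasMinorant.bdd {f : ℝ → ℝ} (hf : HasMinorant f) (x : ℝ) {ρ : ℝ} (hρ : 0 < ρ) :
    BddBelow (Set.range fun v : ℝ => (x - v) ^ 2 / (2 * ρ) + f v) := by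
  obtain ⟨C, hC⟩ := hf.coercive x hρ
  refine ⟨-C, ?_⟩
  rintro _ ⟨v, rfl⟩
  have := hC v
  have := abs_nonneg v
  simp only; linarith

theorem HasMinorant.moreau_le {f : ℝ → ℝ} (hf : HasMinorant f) (x v : ℝ) {ρ : ℝ} (hρ : 0 < ρ) :
    moreau f x ρ ≤ (x - v) ^ 2 / (2 * ρ) + f v := by
  rw [moreau_of_pos hρ]
  exact ciInf_le (hf.bdd x hρ) v

theorem le_moreau {f : ℝ → ℝ} {x t ρ : ℝ} (hρ : 0 < ρ)
    (h : ∀ v, t ≤ (x - v) ^ 2 / (2 * ρ) + f v) : t ≤ moreau f x ρ := by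
  rw [moreau_of_pos hρ]
  exact le_ciInf h

theorem ConvexOn.hasMinorant {ν : ℝ → ℝ} (hν : ConvexOn ℝ Set.univ ν) : HasMinorant ν := by
  have hc : ContinuousOn ν Set.univ := hν.continuousOn isOpen_univ
  obtain ⟨a, b, h⟩ := hν.exists_affine_le_real isClosed_univ hc.lowerSemicontinuousOn
  exact ⟨a, b, fun v => h v (Set.mem_univ v)⟩

theorem HasMinorant.moreau_le' {f : ℝ → ℝ} (hf : HasMinorant f) {x v q ρ : ℝ} (hρ : 0 ≤ ρ)
    (hq : 0 ≤ q) (h : (x - v) ^ 2 ≤ 2 * ρ * q) : moreau f x ρ ≤ q + f v := by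
  rcases hρ.eq_or_lt with rfl | hρ
  · have : x - v = 0 := by nlinarith
    have : x = v := by linarith
    rw [moreau_zero, this]; linarith
  · refine (hf.moreau_le x v hρ).trans ?_
    have : (x - v) ^ 2 / (2 * ρ) ≤ q := by
      rw [div_le_iff₀ (by positivity)]; linarith
    linarith

theorem moreau_approx (f : ℝ → ℝ) (x : ℝ) {ρ : ℝ} (hρ : 0 ≤ ρ) {ε : ℝ} (hε : 0 < ε) :
    ∃ v q : ℝ, 0 ≤ q ∧ (x - v) ^ 2 ≤ 2 * ρ * q ∧ q + f v ≤ moreau f x ρ + ε := by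
  rcases hρ.eq_or_lt with rfl | hρ
  · exact ⟨x, 0, le_rfl, by simp, by rw [moreau_zero]; linarith⟩
  · have : (⨅ v : ℝ, ((x - v) ^ 2 / (2 * ρ) + f v)) < moreau f x ρ + ε := by
      rw [moreau_of_pos hρ]; linarith
    obtain ⟨v, hv⟩ := exists_lt_of_ciInf_lt this
    refine ⟨v, (x - v) ^ 2 / (2 * ρ), by positivity, ?_, hv.le⟩
    rw [mul_div_cancel₀ _ (by positivity)]

theorem moreau_convex {ν : ℝ → ℝ} (hν : ConvexOn ℝ Set.univ ν) {x y ρ σ a b : ℝ}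
    (hρ : 0 ≤ ρ) (hσ : 0 ≤ σ) (ha : 0 ≤ a) (hb : 0 ≤ b) (hab : a + b = 1) :
    moreau ν (a * x + b * y) (a * ρ + b * σ) ≤ a * moreau ν x ρ + b * moreau ν y σ := by
  refine le_of_forall_pos_le_add fun ε hε => ?_
  obtain ⟨v, q, hq, h1, h2⟩ := moreau_approx ν x hρ hε
  obtain ⟨w, p, hp, h3, h4⟩ := moreau_approx ν y hσ hε
  have h5 : (x - v) * (y - w) ≤ ρ * p + σ * q := by
    refine abs_le_of_sq_le_sq' ?_ (by positivity) |>.2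
    have := mul_le_mul h1 h3 (sq_nonneg _) (by positivity)
    nlinarith [sq_nonneg (ρ * p - σ * q)]
  have h6 : (a * x + b * y - (a * v + b * w)) ^ 2 ≤ 2 * (a * ρ + b * σ) * (a * q + b * p) := by
    have e1 := mul_le_mul_of_nonneg_left h1 (sq_nonneg a)
    have e2 := mul_le_mul_of_nonneg_left h3 (sq_nonneg b)
    have e3 := mul_le_mul_of_nonneg_left h5 (mul_nonneg ha hb)
    nlinarith
  have h7 := hν.hasMinorant.moreau_le' (by positivity) (by positivity) h6
  have h8 := hν.2 (Set.mem_univ v) (Set.mem_univ w) ha hb hab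
  simp only [smul_eq_mul] at h8
  have e4 := mul_le_mul_of_nonneg_left h2 ha
  have e5 := mul_le_mul_of_nonneg_left h4 hb
  have : ε = a * ε + b * ε := by rw [← add_mul, hab, one_mul]
  linarith

theorem moreauConj_eq {ν : ℝ → ℝ} (hν : ConvexOn ℝ Set.univ ν) (y : ℝ) {ρ : ℝ} (hρ : 0 < ρ) :
    moreauConj ν y ρ = y ^ 2 / (2 * ρ) - moreau ν (y / ρ) (1 / ρ) := by
  have hi : 0 < 1 / ρ := by positivity
  have hc : Continuous ν := continuousOn_univ.1 (hν.continuousOn isOpen_univ)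
  obtain ⟨C, hC⟩ := hν.hasMinorant.coercive (y / ρ) hi
  have hq : ∀ w, (y / ρ - w) ^ 2 / (2 * (1 / ρ)) = (y - ρ * w) ^ 2 / (2 * ρ) := by
    intro w; field_simp
  have hlim : Tendsto (fun w => (y / ρ - w) ^ 2 / (2 * (1 / ρ)) + ν w) (cocompact ℝ) atTop :=
    tendsto_atTop_mono hC (tendsto_atTop_add_const_right _ (-C) (tendsto_norm_cocompact_atTop (E := ℝ)))
  obtain ⟨w, hw⟩ := Continuous.exists_forall_le (by fun_prop) hlim
  have hmw : moreau ν (y / ρ) (1 / ρ) = (y - ρ * w) ^ 2 / (2 * ρ) + ν w := by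
    rw [← hq]
    exact le_antisymm (hν.hasMinorant.moreau_le _ _ hi) (le_moreau hi hw)
  have hsub : ∀ u, ν w + (y - ρ * w) * (u - w) ≤ ν u := by
    intro u
    have key : ∀ t ∈ Set.Ioo (0 : ℝ) 1,
        -(ρ * t * (u - w) ^ 2 / 2) ≤ ν u - ν w - (y - ρ * w) * (u - w) := by
      intro t ht
      have h1 := hw ((1 - t) * w + t * u)
      rw [hq, hq] at h1
      have h2 := hν.2 (Set.mem_univ w) (Set.mem_univ u) (sub_nonneg.2 ht.2.le) ht.1.le (by ring)
      simp only [smul_eq_mul] at h2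
      have h3 : (y - ρ * ((1 - t) * w + t * u)) ^ 2 / (2 * ρ) =
          (y - ρ * w) ^ 2 / (2 * ρ) - t * (y - ρ * w) * (u - w) + ρ * t ^ 2 * (u - w) ^ 2 / 2 := by
        field_simp; ring
      rw [h3] at h1
      have h4 : t * (-(ρ * t * (u - w) ^ 2 / 2)) ≤ t * (ν u - ν w - (y - ρ * w) * (u - w)) := by
        nlinarith
      exact le_of_mul_le_mul_left h4 ht.1
    have hl : Tendsto (fun t : ℝ => -(ρ * t * (u - w) ^ 2 / 2)) (nhdsWithin 0 (Set.Ioi 0))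
        (nhds (-(ρ * 0 * (u - w) ^ 2 / 2))) := by
      apply Tendsto.mono_left _ nhdsWithin_le_nhds
      exact (by fun_prop : Continuous (fun t : ℝ => -(ρ * t * (u - w) ^ 2 / 2))).tendsto 0
    have := le_of_tendsto hl (by
      filter_upwards [Ioo_mem_nhdsGT (zero_lt_one' ℝ)] with t ht using key t ht)
    simp at this
    linarith
  have hconj : conjE ν (y - ρ * w) = ((w * (y - ρ * w) - ν w : ℝ) : EReal) := by
    apply le_antisymm
    · refine iSup_le fun u => ?_
      rw [EReal.coe_le_coe_iff]
      have := hsub u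
      linarith
    · exact le_iSup (fun v : ℝ => ((v * (y - ρ * w) - ν v : ℝ) : EReal)) w
  have hval : (⨅ v : ℝ, ((((y - v) ^ 2 / (2 * ρ) : ℝ) : EReal) + conjE ν v)) =
      ((y ^ 2 / (2 * ρ) - ((y - ρ * w) ^ 2 / (2 * ρ) + ν w) : ℝ) : EReal) := by
    apply le_antisymm
    · refine (iInf_le _ (y - ρ * w)).trans ?_
      rw [hconj, ← EReal.coe_add, EReal.coe_le_coe_iff]
      apply le_of_eq
      field_simp; ring
    · refine le_iInf fun v => ?_
      have h1 : ((w * v - ν w : ℝ) : EReal) ≤ conjE ν v :=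
        le_iSup (fun u : ℝ => ((u * v - ν u : ℝ) : EReal)) w
      refine le_trans ?_ (add_le_add le_rfl h1)
      rw [← EReal.coe_add, EReal.coe_le_coe_iff]
      have h2 : (y - v) ^ 2 / (2 * ρ) + (w * v - ν w) -
          (y ^ 2 / (2 * ρ) - ((y - ρ * w) ^ 2 / (2 * ρ) + ν w)) =
          (y - v - ρ * w) ^ 2 / (2 * ρ) := by
        field_simp; ring
      have h3 : 0 ≤ (y - v - ρ * w) ^ 2 / (2 * ρ) := by positivity
      linarith
  unfold moreauConj
  rw [hval, EReal.toReal_coe, hmw]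

theorem pin_minorant {τ : ℝ} (_hτ : τ ∈ Set.Ioo (0 : ℝ) 1) : HasMinorant (pinball τ) := by
  refine ⟨τ, 0, fun v => ?_⟩
  unfold pinball
  have := min_le_right v 0
  linarith

theorem pinball_ge {τ : ℝ} {s v : ℝ} (hs : s ∈ Set.Icc (τ - 1) τ) :
    s * v ≤ pinball τ v := by
  unfold pinball
  rcases le_total v 0 with h | h
  · rw [min_eq_left h]; nlinarith [hs.1]
  · rw [min_eq_right h]; nlinarith [hs.2]

theorem pin_lb {τ : ℝ} {s x ρ : ℝ} (hρ : 0 ≤ ρ) (hs : s ∈ Set.Icc (τ - 1) τ) :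
    s * x - ρ * s ^ 2 / 2 ≤ moreau (pinball τ) x ρ := by
  rcases hρ.eq_or_lt with rfl | hρ
  · rw [moreau_zero]; have := pinball_ge (v := x) hs; linarith
  · refine le_moreau hρ fun v => ?_
    have h1 := pinball_ge (v := v) hs
    have h2 : s * (x - v) - ρ * s ^ 2 / 2 ≤ (x - v) ^ 2 / (2 * ρ) := by
      rw [le_div_iff₀ (by positivity)]
      nlinarith [sq_nonneg (x - v - ρ * s)]
    linarith

theorem pin_ex {τ : ℝ} (hτ : τ ∈ Set.Ioo (0 : ℝ) 1) (x : ℝ) {ρ : ℝ} (hρ : 0 ≤ ρ) :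
    ∃ s ∈ Set.Icc (τ - 1) τ, moreau (pinball τ) x ρ = s * x - ρ * s ^ 2 / 2 := by
  suffices ∃ s ∈ Set.Icc (τ - 1) τ, moreau (pinball τ) x ρ ≤ s * x - ρ * s ^ 2 / 2 by
    obtain ⟨s, hs, h⟩ := this
    exact ⟨s, hs, le_antisymm h (pin_lb hρ hs)⟩
  have hp : ∀ v, 0 ≤ v → pinball τ v = τ * v := fun v hv => by
    unfold pinball; rw [min_eq_right hv]; ring
  have hn : ∀ v, v ≤ 0 → pinball τ v = (τ - 1) * v := fun v hv => by
    unfold pinball; rw [min_eq_left hv]; ring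
  rcases le_or_gt (τ * ρ) x with h | h
  · refine ⟨τ, ⟨by linarith, le_rfl⟩, ?_⟩
    have := (pin_minorant hτ).moreau_le' (x := x) (v := x - ρ * τ) (q := ρ * τ ^ 2 / 2) hρ
      (by positivity) (by ring_nf; rfl)
    rw [hp _ (by linarith)] at this
    refine this.trans (le_of_eq (by ring))
  rcases le_or_gt x ((τ - 1) * ρ) with h' | h'
  · refine ⟨τ - 1, ⟨le_rfl, by linarith⟩, ?_⟩
    have := (pin_minorant hτ).moreau_le' (x := x) (v := x - ρ * (τ - 1)) (q := ρ * (τ - 1) ^ 2 / 2) hρ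
      (by positivity) (by ring_nf; rfl)
    rw [hn _ (by linarith)] at this
    refine this.trans (le_of_eq (by ring))
  · have hρ' : 0 < ρ := by
      rcases hρ.eq_or_lt with h0 | h0
      · rw [← h0] at h h'; linarith
      · exact h0
    refine ⟨x / ρ, ⟨by rw [le_div_iff₀ hρ']; linarith, by rw [div_le_iff₀ hρ']; linarith⟩, ?_⟩
    have := (pin_minorant hτ).moreau_le x 0 hρ'
    rw [hp 0 le_rfl] at this
    refine this.trans (le_of_eq (by field_simp; ring))

theorem pin_convex {τ : ℝ} (hτ : τ ∈ Set.Ioo (0 : ℝ) 1) {x y ρ σ a b : ℝ}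
    (hρ : 0 ≤ ρ) (hσ : 0 ≤ σ) (ha : 0 ≤ a) (hb : 0 ≤ b) :
    moreau (pinball τ) (a * x + b * y) (a * ρ + b * σ) ≤
      a * moreau (pinball τ) x ρ + b * moreau (pinball τ) y σ := by
  obtain ⟨s, hs, h⟩ := pin_ex hτ (a * x + b * y) (ρ := a * ρ + b * σ) (by positivity)
  rw [h]
  have h1 := mul_le_mul_of_nonneg_left (pin_lb (x := x) hρ hs) ha
  have h2 := mul_le_mul_of_nonneg_left (pin_lb (x := y) hσ hs) hb
  linarith

theorem pin_lip {τ : ℝ} (hτ : τ ∈ Set.Ioo (0 : ℝ) 1) {x y ρ σ : ℝ} (hρ : 0 ≤ ρ) (hσ : 0 ≤ σ) :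
    |moreau (pinball τ) x ρ - moreau (pinball τ) y σ| ≤ |x - y| + |ρ - σ| := by
  have key : ∀ {x y ρ σ : ℝ}, 0 ≤ ρ → 0 ≤ σ →
      moreau (pinball τ) x ρ - moreau (pinball τ) y σ ≤ |x - y| + |ρ - σ| := by
    intro x y ρ σ hρ hσ
    obtain ⟨s, hs, h⟩ := pin_ex hτ x hρ
    have h1 := pin_lb (x := y) hσ hs
    have hs1 : |s| ≤ 1 := abs_le.2 ⟨by linarith [hs.1, hτ.1], by linarith [hs.2, hτ.2]⟩
    have h2 : s * (x - y) ≤ |x - y| := by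
      refine (le_abs_self _).trans ?_
      rw [abs_mul]; exact mul_le_of_le_one_left (abs_nonneg _) hs1
    have h3 : s ^ 2 * (σ - ρ) ≤ |ρ - σ| := by
      refine (le_abs_self _).trans ?_
      rw [abs_mul, abs_sub_comm ρ σ]
      refine mul_le_of_le_one_left (abs_nonneg _) ?_
      rw [abs_pow]; exact pow_le_one₀ (abs_nonneg _) hs1
    have h4 := abs_nonneg (ρ - σ)
    rw [h]
    linarith
  rw [abs_le]
  have h1 := key (x := x) (y := y) hρ hσ
  have h2 := key (x := y) (y := x) hσ hρ
  rw [abs_sub_comm y x, abs_sub_comm σ ρ] at h2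
  constructor <;> linarith

theorem pin_large {τ : ℝ} (hτ : τ ∈ Set.Ioo (0 : ℝ) 1) {x ρ : ℝ} (hρ : 0 ≤ ρ) (h : τ * ρ ≤ x) :
    moreau (pinball τ) x ρ = τ * x - ρ * τ ^ 2 / 2 := by
  apply le_antisymm
  · obtain ⟨s, hs, h1⟩ := pin_ex hτ x hρ
    rw [h1]
    have h2 := mul_nonneg (sub_nonneg.2 hs.2) (sub_nonneg.2 h)
    have h3 := mul_nonneg hρ (sq_nonneg (τ - s))
    nlinarith
  · exact pin_lb hρ ⟨by linarith, le_rfl⟩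

theorem pin_mono {τ : ℝ} (hτ : τ ∈ Set.Ioo (0 : ℝ) 1) {x ρ : ℝ} (hρ : 0 ≤ ρ) :
    moreau (pinball τ) x ρ ≤ moreau (pinball τ) x 0 := by
  obtain ⟨s, hs, h1⟩ := pin_ex hτ x hρ
  have h2 := pin_lb (x := x) le_rfl hs
  have h3 := mul_nonneg hρ (sq_nonneg s)
  rw [h1]; linarith

/-- Concavity of `M ↦ e_ℓ(x; ρ/M)`. -/
theorem pin_concave {τ : ℝ} (hτ : τ ∈ Set.Ioo (0 : ℝ) 1) {x ρ M N a b : ℝ} (hρ : 0 ≤ ρ)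
    (hM : 0 < M) (hN : 0 < N) (ha : 0 ≤ a) (hb : 0 ≤ b) (hab : a + b = 1) :
    a * moreau (pinball τ) x (ρ / M) + b * moreau (pinball τ) x (ρ / N) ≤
      moreau (pinball τ) x (ρ / (a * M + b * N)) := by
  rcases hρ.eq_or_lt with rfl | hρ
  · simp only [zero_div]
    rw [← add_mul, hab, one_mul]
  have hMN : 0 < a * M + b * N := by
    rcases ha.eq_or_lt with rfl | ha
    · have : b = 1 := by linarith
      subst this; linarith
    · have := mul_pos ha hM
      have := mul_nonneg hb hN.le
      linarith
  refine le_moreau (by positivity) fun v => ?_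
  have h1 := mul_le_mul_of_nonneg_left ((pin_minorant hτ).moreau_le x v (div_pos hρ hM)) ha
  have h2 := mul_le_mul_of_nonneg_left ((pin_minorant hτ).moreau_le x v (div_pos hρ hN)) hb
  have e : ∀ K : ℝ, 0 < K → (x - v) ^ 2 / (2 * (ρ / K)) = K * ((x - v) ^ 2 / (2 * ρ)) := by
    intro K hK; field_simp
  rw [e _ hM] at h1
  rw [e _ hN] at h2
  rw [e _ hMN]
  have : pinball τ v = a * pinball τ v + b * pinball τ v := by rw [← add_mul, hab, one_mul]
  linarith

/-- The compensated envelope: an infimum of functions affine in `(M, ρ)`. -/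
def Kfun (ν : ℝ → ℝ) (u M ρ h b : ℝ) : ℝ :=
  moreau ν (M * u / ρ * h + b) (u / ρ) - M ^ 2 * u / (2 * ρ) * h ^ 2

theorem Kquad {u M ρ h b v : ℝ} (hu : 0 < u) (hρ : 0 < ρ) :
    (M * u / ρ * h + b - v) ^ 2 / (2 * (u / ρ)) - M ^ 2 * u / (2 * ρ) * h ^ 2 =
      M * h * (b - v) + ρ * (b - v) ^ 2 / (2 * u) := by
  field_simp; ring

theorem Kfun_le {ν : ℝ → ℝ} (hν : HasMinorant ν) {u M ρ : ℝ} (h b v : ℝ) (hu : 0 < u) (hρ : 0 < ρ) :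
    Kfun ν u M ρ h b ≤ M * h * (b - v) + ρ * (b - v) ^ 2 / (2 * u) + ν v := by
  have := hν.moreau_le (M * u / ρ * h + b) v (div_pos hu hρ)
  rw [← Kquad hu hρ]; unfold Kfun; linarith

theorem le_Kfun {ν : ℝ → ℝ} {u M ρ h b t : ℝ} (hu : 0 < u) (hρ : 0 < ρ)
    (ht : ∀ v, t ≤ M * h * (b - v) + ρ * (b - v) ^ 2 / (2 * u) + ν v) :
    t ≤ Kfun ν u M ρ h b := by
  have := le_moreau (f := ν) (x := M * u / ρ * h + b) (t := t + M ^ 2 * u / (2 * ρ) * h ^ 2)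
    (div_pos hu hρ) (fun v => by
      have h1 := ht v
      rw [← Kquad hu hρ] at h1; linarith)
  unfold Kfun; linarith

theorem Kfun_zero (ν : ℝ → ℝ) (M ρ h b : ℝ) : Kfun ν 0 M ρ h b = ν b := by
  simp [Kfun, moreau_zero]

theorem Kfun_bdd {ν : ℝ → ℝ} (hν : HasMinorant ν) {u M ρ : ℝ} (h b : ℝ) (hu : 0 ≤ u) (hρ : 0 < ρ) :
    Kfun ν u M ρ h b ≤ ν b := by
  rcases hu.eq_or_lt with rfl | hu
  · rw [Kfun_zero]
  · have := Kfun_le hν (M := M) h b b hu hρ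
    simpa using this

theorem Kfun_concave {ν : ℝ → ℝ} (hν : HasMinorant ν) {u M N ρ σ p q : ℝ} (h b : ℝ) (hu : 0 ≤ u)
    (hρ : 0 < ρ) (hσ : 0 < σ) (hp : 0 ≤ p) (hq : 0 ≤ q) (hpq : p + q = 1) :
    p * Kfun ν u M ρ h b + q * Kfun ν u N σ h b ≤
      Kfun ν u (p * M + q * N) (p * ρ + q * σ) h b := by
  rcases hu.eq_or_lt with rfl | hu
  · simp only [Kfun_zero]; rw [← add_mul, hpq, one_mul]
  have hs : 0 < p * ρ + q * σ := by
    rcases hp.eq_or_lt with rfl | hp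
    · have : q = 1 := by linarith
      subst this; linarith
    · have := mul_pos hp hρ
      have := mul_nonneg hq hσ.le
      linarith
  refine le_Kfun hu hs fun v => ?_
  have h1 := mul_le_mul_of_nonneg_left (Kfun_le hν (M := M) h b v hu hρ) hp
  have h2 := mul_le_mul_of_nonneg_left (Kfun_le hν (M := N) h b v hu hσ) hq
  have h3 : ν v = p * ν v + q * ν v := by rw [← add_mul, hpq, one_mul]
  have h4 : (p * M + q * N) * h * (b - v) + (p * ρ + q * σ) * (b - v) ^ 2 / (2 * u) =
    p * (M * h * (b - v) + ρ * (b - v) ^ 2 / (2 * u)) +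
    q * (N * h * (b - v) + σ * (b - v) ^ 2 / (2 * u)) := by ring
  linarith

theorem Kfun_convex_u {ν : ℝ → ℝ} (hν : ConvexOn ℝ Set.univ ν) {u w M ρ p q : ℝ} (h b : ℝ)
    (hu : 0 ≤ u) (hw : 0 ≤ w) (hρ : 0 < ρ) (hp : 0 ≤ p) (hq : 0 ≤ q) (hpq : p + q = 1) :
    Kfun ν (p * u + q * w) M ρ h b ≤ p * Kfun ν u M ρ h b + q * Kfun ν w M ρ h b := by
  have h1 := moreau_convex hν (x := M * u / ρ * h + b) (y := M * w / ρ * h + b)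
    (div_nonneg hu hρ.le) (div_nonneg hw hρ.le) hp hq hpq
  have e1 : p * (M * u / ρ * h + b) + q * (M * w / ρ * h + b) =
      M * (p * u + q * w) / ρ * h + b := by
    have : b = p * b + q * b := by rw [← add_mul, hpq, one_mul]
    rw [this]; linear_combination (p*b+q*b) * hpq
  have e2 : p * (u / ρ) + q * (w / ρ) = (p * u + q * w) / ρ := by ring
  rw [e1, e2] at h1
  unfold Kfun
  have e3 : M ^ 2 * (p * u + q * w) / (2 * ρ) * h ^ 2 =
    p * (M ^ 2 * u / (2 * ρ) * h ^ 2) + q * (M ^ 2 * w / (2 * ρ) * h ^ 2) := by ring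
  linarith

theorem moreauConj_eq_Kfun {ν : ℝ → ℝ} (hν : ConvexOn ℝ Set.univ ν) {u M ρ : ℝ} (h b : ℝ)
    (hu : 0 < u) (hρ : 0 < ρ) :
    moreauConj ν (M * h + ρ / u * b) (ρ / u) =
      M * (h * b) + ρ / (2 * u) * b ^ 2 - Kfun ν u M ρ h b := by
  rw [moreauConj_eq hν _ (div_pos hρ hu)]
  have e1 : (M * h + ρ / u * b) / (ρ / u) = M * u / ρ * h + b := by field_simp
  have e2 : 1 / (ρ / u) = u / ρ := by field_simp
  have e3 : (M * h + ρ / u * b) ^ 2 / (2 * (ρ / u)) =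
    M ^ 2 * u / (2 * ρ) * h ^ 2 + M * (h * b) + ρ / (2 * u) * b ^ 2 := by
    field_simp; ring
  rw [e1, e2, e3]; unfold Kfun; ring

theorem gauss_int_sq : Integrable (fun x : ℝ => x ^ 2) (gaussianReal 0 1) := by
  have := (memLp_id_gaussianReal (μ := 0) (v := 1) 2).integrable_sq
  simpa using this

theorem gauss_int_id : Integrable (fun x : ℝ => x) (gaussianReal 0 1) := by
  have := (memLp_id_gaussianReal (μ := 0) (v := 1) 1).integrable (by simp)
  exact this

theorem gauss_sq : ∫ x : ℝ, x ^ 2 ∂(gaussianReal 0 1) = 1 := by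
  have h := variance_fun_id_gaussianReal (μ := 0) (v := 1)
  rw [variance_eq_integral (by fun_prop)] at h
  simpa using h

theorem int_id_of_sq {P : Measure ℝ} [IsProbabilityMeasure P] (h : Integrable (fun x => x ^ 2) P) :
    Integrable (fun x : ℝ => x) P := by
  have : MemLp (fun x : ℝ => x) 2 P := (memLp_two_iff_integrable_sq (by fun_prop)).2 h
  exact this.integrable (by norm_num)

/-- Expected envelope of the pinball loss. -/
def Tfun (τ : ℝ) (Pε : Measure ℝ) (β u ρ : ℝ) : ℝ :=
  ∫ z, moreau (pinball τ) (u * z.1 + z.2 - β) ρ ∂((gaussianReal 0 1).prod Pε)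

/-- Expected compensated envelope. -/
def KK (γ : ℝ) (Pβ : Measure ℝ) (ν : ℝ → ℝ) (u M ρ : ℝ) : ℝ :=
  ∫ z, Kfun ν u M ρ z.1 (γ * z.2) ∂((gaussianReal 0 1).prod Pβ)

section K
variable {γ : ℝ} {Pβ : Measure ℝ} [IsProbabilityMeasure Pβ] {ν : ℝ → ℝ}

theorem Kfun_int (hνfin : ∀ (c ρ : ℝ), 0 ≤ ρ →
      Integrable (fun z : ℝ × ℝ => moreau ν (c * z.1 + γ * z.2) ρ)
        ((gaussianReal 0 1).prod Pβ)) {u : ℝ} (M : ℝ) {ρ : ℝ} (hu : 0 ≤ u) (hρ : 0 < ρ) :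
    Integrable (fun z : ℝ × ℝ => Kfun ν u M ρ z.1 (γ * z.2)) ((gaussianReal 0 1).prod Pβ) := by
  unfold Kfun
  exact (hνfin (M * u / ρ) (u / ρ) (by positivity)).sub ((gauss_int_sq.comp_fst Pβ).const_mul _)

theorem KK_eq (hνfin : ∀ (c ρ : ℝ), 0 ≤ ρ →
      Integrable (fun z : ℝ × ℝ => moreau ν (c * z.1 + γ * z.2) ρ)
        ((gaussianReal 0 1).prod Pβ)) {u : ℝ} (M : ℝ) {ρ : ℝ} (hu : 0 ≤ u) (hρ : 0 < ρ) :
    KK γ Pβ ν u M ρ = (∫ z, moreau ν (M * u / ρ * z.1 + γ * z.2) (u / ρ)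
        ∂((gaussianReal 0 1).prod Pβ)) - M ^ 2 * u / (2 * ρ) := by
  unfold KK Kfun
  rw [integral_sub (hνfin (M * u / ρ) (u / ρ) (by positivity))
    ((gauss_int_sq.comp_fst Pβ).const_mul _), integral_const_mul,
    integral_fun_fst (fun x : ℝ => x ^ 2), gauss_sq]
  simp

theorem KK_bdd (hν : HasMinorant ν) (hνfin : ∀ (c ρ : ℝ), 0 ≤ ρ →
      Integrable (fun z : ℝ × ℝ => moreau ν (c * z.1 + γ * z.2) ρ)
        ((gaussianReal 0 1).prod Pβ)) {u : ℝ} (M : ℝ) {ρ : ℝ} (hu : 0 ≤ u) (hρ : 0 < ρ) :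
    KK γ Pβ ν u M ρ ≤ ∫ z, ν (γ * z.2) ∂((gaussianReal 0 1).prod Pβ) := by
  refine integral_mono (Kfun_int hνfin M hu hρ) ?_ fun z => Kfun_bdd hν _ _ hu hρ
  have := hνfin 0 0 le_rfl
  simpa [moreau_zero] using this

theorem KK_concave (hν : HasMinorant ν) (hνfin : ∀ (c ρ : ℝ), 0 ≤ ρ →
      Integrable (fun z : ℝ × ℝ => moreau ν (c * z.1 + γ * z.2) ρ)
        ((gaussianReal 0 1).prod Pβ)) {u M N ρ σ p q : ℝ} (hu : 0 ≤ u)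
    (hρ : 0 < ρ) (hσ : 0 < σ) (hs : 0 < p * ρ + q * σ) (hp : 0 ≤ p) (hq : 0 ≤ q) (hpq : p + q = 1) :
    p * KK γ Pβ ν u M ρ + q * KK γ Pβ ν u N σ ≤
      KK γ Pβ ν u (p * M + q * N) (p * ρ + q * σ) := by
  unfold KK
  rw [← integral_const_mul, ← integral_const_mul,
    ← integral_add ((Kfun_int hνfin M hu hρ).const_mul _) ((Kfun_int hνfin N hu hσ).const_mul _)]
  exact integral_mono (((Kfun_int hνfin M hu hρ).const_mul _).add
    ((Kfun_int hνfin N hu hσ).const_mul _)) (Kfun_int hνfin _ hu hs)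
    fun z => Kfun_concave hν _ _ hu hρ hσ hp hq hpq

theorem KK_convex (hν : ConvexOn ℝ Set.univ ν) (hνfin : ∀ (c ρ : ℝ), 0 ≤ ρ →
      Integrable (fun z : ℝ × ℝ => moreau ν (c * z.1 + γ * z.2) ρ)
        ((gaussianReal 0 1).prod Pβ)) {u w M ρ p q : ℝ} (hu : 0 ≤ u) (hw : 0 ≤ w)
    (hρ : 0 < ρ) (hp : 0 ≤ p) (hq : 0 ≤ q) (hpq : p + q = 1) :
    KK γ Pβ ν (p * u + q * w) M ρ ≤ p * KK γ Pβ ν u M ρ + q * KK γ Pβ ν w M ρ := by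
  unfold KK
  rw [← integral_const_mul, ← integral_const_mul,
    ← integral_add ((Kfun_int hνfin M hu hρ).const_mul _) ((Kfun_int hνfin M hw hρ).const_mul _)]
  exact integral_mono (Kfun_int hνfin _ (by positivity) hρ) (((Kfun_int hνfin M hu hρ).const_mul _).add
    ((Kfun_int hνfin M hw hρ).const_mul _))
    fun z => Kfun_convex_u hν _ _ hu hw hρ hp hq hpq

theorem KK_conj (hν : ConvexOn ℝ Set.univ ν) (hPβ2 : Integrable (fun x => x ^ 2) Pβ)
    (hνfin : ∀ (c ρ : ℝ), 0 ≤ ρ →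
      Integrable (fun z : ℝ × ℝ => moreau ν (c * z.1 + γ * z.2) ρ)
        ((gaussianReal 0 1).prod Pβ)) {u : ℝ} (M : ℝ) {ρ : ℝ} (hu : 0 < u) (hρ : 0 < ρ) :
    ∫ z, moreauConj ν (M * z.1 + ρ / u * γ * z.2) (ρ / u) ∂((gaussianReal 0 1).prod Pβ) =
      ρ / (2 * u) * ∫ z, (γ * z.2) ^ 2 ∂((gaussianReal 0 1).prod Pβ) - KK γ Pβ ν u M ρ := by
  have hi1 : Integrable (fun z : ℝ × ℝ => z.1 * (γ * z.2)) ((gaussianReal 0 1).prod Pβ) :=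
    gauss_int_id.mul_prod ((int_id_of_sq hPβ2).const_mul γ)
  have hi2 : Integrable (fun z : ℝ × ℝ => (γ * z.2) ^ 2) ((gaussianReal 0 1).prod Pβ) := by
    have := (hPβ2.comp_snd (gaussianReal 0 1)).const_mul (γ ^ 2)
    refine this.congr (Eventually.of_forall fun z => ?_)
    simp only; ring
  have h1 : ∀ z : ℝ × ℝ, moreauConj ν (M * z.1 + ρ / u * γ * z.2) (ρ / u) =
      M * (z.1 * (γ * z.2)) + ρ / (2 * u) * (γ * z.2) ^ 2 - Kfun ν u M ρ z.1 (γ * z.2) := by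
    intro z
    rw [← moreauConj_eq_Kfun hν _ _ hu hρ]
    congr 1; ring
  simp_rw [h1]
  have hi3 : Integrable (fun z : ℝ × ℝ => M * (z.1 * (γ * z.2)) + ρ / (2 * u) * (γ * z.2) ^ 2)
      ((gaussianReal 0 1).prod Pβ) := (hi1.const_mul _).add (hi2.const_mul _)
  rw [integral_sub hi3 (Kfun_int hνfin M hu.le hρ),
    integral_add (hi1.const_mul _) (hi2.const_mul _), integral_const_mul, integral_const_mul,
    integral_prod_mul (fun x : ℝ => x) (fun x : ℝ => γ * x), integral_id_gaussianReal]
  unfold KK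
  ring

theorem KK_strict (hν : ConvexOn ℝ Set.univ ν) (hPβ2 : Integrable (fun x => x ^ 2) Pβ)
    (hνfin : ∀ (c ρ : ℝ), 0 ≤ ρ →
      Integrable (fun z : ℝ × ℝ => moreau ν (c * z.1 + γ * z.2) ρ)
        ((gaussianReal 0 1).prod Pβ)) (hc : ConjDerivAssumption γ Pβ ν)
    {u M N C : ℝ} (hu : 0 < u) (hC : 0 < C) (hM : 0 < M) (hMN : M < N) :
    ∃ δ > 0, ∀ ρ ∈ Set.Ioc (0 : ℝ) C, KK γ Pβ ν u N ρ ≤ KK γ Pβ ν u M ρ - δ := by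
  obtain ⟨D1, D2, hD, hm⟩ := hc
  obtain ⟨m, hm0, hm⟩ := hm (Set.Icc M N) isCompact_Icc (fun c hc => lt_of_lt_of_le hM hc.1)
    (C / u) (by positivity)
  refine ⟨M * m * (N - M), by have := sub_pos.2 hMN; positivity, fun ρ hρ => ?_⟩
  have hr : 0 < ρ / u := div_pos hρ.1 hu
  have hrC : ρ / u ∈ Set.Ioc (0 : ℝ) (C / u) := ⟨hr, by gcongr; exact hρ.2⟩
  obtain ⟨-, -, hder⟩ := hD (ρ / u) hr
  have hmv := Convex.mul_sub_le_image_sub_of_le_deriv (convex_Icc M N)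
    (f := fun c' => ∫ z, moreauConj ν (c' * z.1 + ρ / u * γ * z.2) (ρ / u)
            ∂((gaussianReal 0 1).prod Pβ)) (C := M * m)
    (fun c _ => (hder c).1.continuousAt.continuousWithinAt)
    (fun c _ => (hder c).1.differentiableAt.differentiableWithinAt)
    (by
      intro c hc
      have hc' : c ∈ Set.Icc M N := interior_subset hc
      rw [(hder c).1.deriv, (hder c).2]
      exact mul_le_mul hc'.1 (hm c hc' _ hrC) hm0.le (hM.le.trans hc'.1))
    M ⟨le_rfl, hMN.le⟩ N ⟨hMN.le, le_rfl⟩ hMN.le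
  simp only [KK_conj hν hPβ2 hνfin _ hu hρ.1] at hmv
  linarith
end K

section T
variable {τ : ℝ} {Pε : Measure ℝ} [IsProbabilityMeasure Pε]

theorem T_int (hτ : τ ∈ Set.Ioo (0 : ℝ) 1) (hP : Integrable (fun x : ℝ => x ^ 2) Pε)
    (β u : ℝ) {ρ : ℝ} (hρ : 0 ≤ ρ) :
    Integrable (fun z : ℝ × ℝ => moreau (pinball τ) (u * z.1 + z.2 - β) ρ)
      ((gaussianReal 0 1).prod Pε) := by
  have hcont : Continuous (fun x => moreau (pinball τ) x ρ) := by
    refine (LipschitzWith.of_dist_le_mul (K := 1) fun x y => ?_).continuous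
    have := pin_lip hτ (x := x) (y := y) hρ hρ
    simpa [Real.dist_eq] using this
  have hb : Integrable (fun z : ℝ × ℝ => |u * z.1 + z.2 - β| + |ρ - 0|)
      ((gaussianReal 0 1).prod Pε) :=
    (((((gauss_int_id.comp_fst Pε).const_mul u).add
      ((int_id_of_sq hP).comp_snd (gaussianReal 0 1))).sub (integrable_const β)).abs).add
      (integrable_const _)
  refine hb.mono' (by
    exact (hcont.comp (by fun_prop : Continuous fun z : ℝ × ℝ => u * z.1 + z.2 - β)).aestronglyMeasurable)
    (Eventually.of_forall fun z => ?_)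
  have h := pin_lip hτ (x := u * z.1 + z.2 - β) (y := 0) hρ le_rfl
  have h0 : moreau (pinball τ) 0 0 = 0 := by simp [moreau_zero, pinball]
  rw [h0, sub_zero, sub_zero] at h
  simpa using h

theorem T_lip (hτ : τ ∈ Set.Ioo (0 : ℝ) 1) (hP : Integrable (fun x : ℝ => x ^ 2) Pε)
    (β u β' u' : ℝ) {ρ ρ' : ℝ} (hρ : 0 ≤ ρ) (hρ' : 0 ≤ ρ') :
    |Tfun τ Pε β u ρ - Tfun τ Pε β' u' ρ'| ≤
      |u - u'| * (∫ x, |x| ∂(gaussianReal 0 1)) + |β - β'| + |ρ - ρ'| := by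
  unfold Tfun
  rw [← integral_sub (T_int hτ hP β u hρ) (T_int hτ hP β' u' hρ')]
  refine (abs_integral_le_integral_abs).trans ?_
  have hi : Integrable (fun z : ℝ × ℝ => |u - u'| * |z.1| + (|β - β'| + |ρ - ρ'|))
      ((gaussianReal 0 1).prod Pε) :=
    ((gauss_int_id.abs.comp_fst Pε).const_mul _).add (integrable_const _)
  have := integral_mono (((T_int hτ hP β u hρ).sub (T_int hτ hP β' u' hρ')).abs) hi (fun z => by
    have h1 := pin_lip hτ (x := u * z.1 + z.2 - β) (y := u' * z.1 + z.2 - β') hρ hρ'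
    have h2 : |u * z.1 + z.2 - β - (u' * z.1 + z.2 - β')| ≤ |u - u'| * |z.1| + |β - β'| := by
      rw [← abs_mul]
      have : u * z.1 + z.2 - β - (u' * z.1 + z.2 - β') = (u - u') * z.1 - (β - β') := by ring
      rw [this]; exact abs_sub _ _
    simp only [Pi.sub_apply]
    linarith)
  refine this.trans (le_of_eq ?_)
  rw [integral_add ((gauss_int_id.abs.comp_fst Pε).const_mul _) (integrable_const _),
    integral_const_mul, integral_fun_fst (fun x : ℝ => |x|)]
  simp [add_assoc]

theorem T_mono (hτ : τ ∈ Set.Ioo (0 : ℝ) 1) (hP : Integrable (fun x : ℝ => x ^ 2) Pε)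
    (β u : ℝ) {ρ : ℝ} (hρ : 0 ≤ ρ) : Tfun τ Pε β u ρ ≤ Tfun τ Pε β u 0 :=
  integral_mono (T_int hτ hP β u hρ) (T_int hτ hP β u le_rfl) fun _ => pin_mono hτ hρ

theorem T_convex (hτ : τ ∈ Set.Ioo (0 : ℝ) 1) (hP : Integrable (fun x : ℝ => x ^ 2) Pε)
    {β u β' u' ρ ρ' a b : ℝ} (hρ : 0 ≤ ρ) (hρ' : 0 ≤ ρ') (ha : 0 ≤ a) (hb : 0 ≤ b)
    (hab : a + b = 1) :
    Tfun τ Pε (a * β + b * β') (a * u + b * u') (a * ρ + b * ρ') ≤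
      a * Tfun τ Pε β u ρ + b * Tfun τ Pε β' u' ρ' := by
  have h1 := (T_int hτ hP β u hρ).const_mul a
  have h2 := (T_int hτ hP β' u' hρ').const_mul b
  unfold Tfun
  rw [← integral_const_mul, ← integral_const_mul, ← integral_add h1 h2]
  refine integral_mono (T_int hτ hP _ _ (by positivity)) (h1.add h2) fun z => ?_
  have := pin_convex hτ (x := u * z.1 + z.2 - β) (y := u' * z.1 + z.2 - β') hρ hρ' ha hb
  refine le_trans (le_of_eq ?_) this
  congr 1
  linear_combination (-z.2) * hab

theorem T_concave (hτ : τ ∈ Set.Ioo (0 : ℝ) 1) (hP : Integrable (fun x : ℝ => x ^ 2) Pε)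
    (β u : ℝ) {ρ M N a b : ℝ} (hρ : 0 ≤ ρ)
    (hM : 0 < M) (hN : 0 < N) (hMN : 0 < a * M + b * N) (ha : 0 ≤ a) (hb : 0 ≤ b)
    (hab : a + b = 1) :
    a * Tfun τ Pε β u (ρ / M) + b * Tfun τ Pε β u (ρ / N) ≤
      Tfun τ Pε β u (ρ / (a * M + b * N)) := by
  have h1 := (T_int hτ hP β u (div_nonneg hρ hM.le)).const_mul a
  have h2 := (T_int hτ hP β u (div_nonneg hρ hN.le)).const_mul b
  unfold Tfun
  rw [← integral_const_mul, ← integral_const_mul, ← integral_add h1 h2]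
  exact integral_mono (h1.add h2) (T_int hτ hP _ _ (by positivity)) fun z =>
    pin_concave hτ hρ hM hN ha hb hab

theorem T_strict (hτ : τ ∈ Set.Ioo (0 : ℝ) 1) (hPε : NoiseAssumption Pε)
    (β : ℝ) {u ρ M N : ℝ} (hu : 0 ≤ u) (hρ : 0 < ρ) (hM : 0 < M) (hMN : M < N) :
    1 / 2 * Tfun τ Pε β u (ρ / M) + 1 / 2 * Tfun τ Pε β u (ρ / N) <
      Tfun τ Pε β u (ρ / (1 / 2 * M + 1 / 2 * N)) := by
  have hP := hPε.second_moment
  have hN : 0 < N := hM.trans hMN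
  have hK : 0 < 1 / 2 * M + 1 / 2 * N := by positivity
  have h1 := (T_int hτ hP β u (div_nonneg hρ.le hM.le)).const_mul (1 / 2)
  have h2 := (T_int hτ hP β u (div_nonneg hρ.le hN.le)).const_mul (1 / 2)
  have h3 := T_int hτ hP β u (div_nonneg hρ.le hK.le)
  have h4 : Integrable (fun z : ℝ × ℝ => 1 / 2 * moreau (pinball τ) (u * z.1 + z.2 - β) (ρ / M) +
      1 / 2 * moreau (pinball τ) (u * z.1 + z.2 - β) (ρ / N)) ((gaussianReal 0 1).prod Pε) :=
    h1.add h2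
  have h5 : Integrable (fun z : ℝ × ℝ =>
      moreau (pinball τ) (u * z.1 + z.2 - β) (ρ / (1 / 2 * M + 1 / 2 * N)) -
        (1 / 2 * moreau (pinball τ) (u * z.1 + z.2 - β) (ρ / M) +
        1 / 2 * moreau (pinball τ) (u * z.1 + z.2 - β) (ρ / N)))
      ((gaussianReal 0 1).prod Pε) := h3.sub h4
  unfold Tfun
  rw [← integral_const_mul, ← integral_const_mul, ← integral_add h1 h2, ← sub_pos,
    ← integral_sub h3 h4]
  rw [integral_pos_iff_support_of_nonneg (fun z => by
    have := pin_concave hτ (x := u * z.1 + z.2 - β) hρ.le hM hN (a := 1 / 2) (b := 1 / 2)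
      (by norm_num) (by norm_num) (by norm_num)
    simp only [Pi.zero_apply]
    linarith) h5]
  have hsub : Set.Ioi (0 : ℝ) ×ˢ Set.Ioi (τ * (ρ / M) + β) ⊆ Function.support
      (fun z : ℝ × ℝ => moreau (pinball τ) (u * z.1 + z.2 - β) (ρ / (1 / 2 * M + 1 / 2 * N)) -
        (1 / 2 * moreau (pinball τ) (u * z.1 + z.2 - β) (ρ / M) +
        1 / 2 * moreau (pinball τ) (u * z.1 + z.2 - β) (ρ / N))) := by
    rintro ⟨g, e⟩ ⟨hg, he⟩
    simp only [Set.mem_Ioi] at hg he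
    have hx : τ * (ρ / M) ≤ u * g + e - β := by
      have := mul_nonneg hu hg.le
      linarith
    have hNM : ρ / N ≤ ρ / M := by gcongr
    have hKM : ρ / (1 / 2 * M + 1 / 2 * N) ≤ ρ / M := by gcongr; linarith
    have hτ0 := hτ.1
    simp only [Function.mem_support]
    rw [pin_large hτ (by positivity) hx,
      pin_large hτ (by positivity) ((mul_le_mul_of_nonneg_left hNM hτ0.le).trans hx),
      pin_large hτ (by positivity) ((mul_le_mul_of_nonneg_left hKM hτ0.le).trans hx)]
    have e1 : 1 / 2 * (ρ / M) + 1 / 2 * (ρ / N) - ρ / (1 / 2 * M + 1 / 2 * N) =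
        ρ * (N - M) ^ 2 / (2 * M * N * (M + N)) := by
      field_simp; ring
    have e2 : 0 < ρ * (N - M) ^ 2 / (2 * M * N * (M + N)) := by
      have := sub_pos.2 hMN
      positivity
    have e3 : 0 < (1 / 2 * (ρ / M) + 1 / 2 * (ρ / N) - ρ / (1 / 2 * M + 1 / 2 * N)) * τ ^ 2 := by
      rw [e1]; positivity
    apply ne_of_gt
    linarith
  refine lt_of_lt_of_le ?_ (measure_mono hsub)
  rw [Measure.prod_prod]
  have hg : gaussianReal 0 1 (Set.Ioi 0) ≠ 0 := fun h => by
    have := gaussianReal_absolutelyContinuous' 0 (v := 1) (by norm_num) h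
    simp at this
  have he : Pε (Set.Ioi (τ * (ρ / M) + β)) ≠ 0 := fun h => by
    obtain ⟨f, hfc, hf0, -, hfP⟩ := hPε.density
    have hac : volume ≪ Pε := by
      rw [hfP]
      refine withDensity_absolutelyContinuous' (by fun_prop) (Eventually.of_forall fun x => ?_)
      simpa using hf0 x
    have := hac h
    simp at this
  exact pos_iff_ne_zero.2 (mul_ne_zero hg he)
end T

theorem T_cont {τ : ℝ} {Pε : Measure ℝ} [IsProbabilityMeasure Pε] (hτ : τ ∈ Set.Ioo (0 : ℝ) 1)
    (hP : Integrable (fun x : ℝ => x ^ 2) Pε) :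
    ContinuousOn (fun q : ℝ × ℝ × ℝ => Tfun τ Pε q.1 q.2.1 q.2.2) {q | 0 ≤ q.2.2} := by
  intro q hq
  rw [ContinuousWithinAt, tendsto_iff_dist_tendsto_zero]
  have hl : Tendsto (fun r : ℝ × ℝ × ℝ => |r.2.1 - q.2.1| * (∫ x, |x| ∂(gaussianReal 0 1)) +
      |r.1 - q.1| + |r.2.2 - q.2.2|) (nhdsWithin q {q | 0 ≤ q.2.2}) (nhds 0) := by
    have hc : Continuous (fun r : ℝ × ℝ × ℝ => |r.2.1 - q.2.1| * (∫ x, |x| ∂(gaussianReal 0 1)) +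
      |r.1 - q.1| + |r.2.2 - q.2.2|) := by fun_prop
    have := (hc.tendsto q).mono_left (nhdsWithin_le_nhds (s := {q : ℝ × ℝ × ℝ | 0 ≤ q.2.2}))
    simpa using this
  refine squeeze_zero' (Eventually.of_forall fun _ => dist_nonneg) ?_ hl
  filter_upwards [self_mem_nhdsWithin] with r hr
  rw [Real.dist_eq]
  exact T_lip hτ hP _ _ _ _ hr hq

/-- Lemma 14 of the paper, uniqueness of the optimal `M_η`.  With
`(β₀*, M_u*, ρ₁*)` the unique minimizing triple of the asymptotic program and `M_u* > 0`, the
function `M_η ↦ max_{ρ₂ ∈ (0,C₂]} min_{(β₀,M_u,ρ₁) ∈ box} A` attains its maximum over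
`[c_η, C_η]` at a unique point. -/
theorem asym_program_unique_Meta
    (τ γ : ℝ) (hτ : τ ∈ Set.Ioo (0 : ℝ) 1) (hγ : γ ∈ Set.Ioo (0 : ℝ) (2 / Real.pi))
    (Pε Pβ : Measure ℝ) [IsProbabilityMeasure Pε] [IsProbabilityMeasure Pβ]
    (hPε : NoiseAssumption Pε) (hPβ2 : Integrable (fun x => x ^ 2) Pβ)
    (ν : ℝ → ℝ) (hν : ConvexOn ℝ Set.univ ν)
    (hνfin : ∀ (c ρ : ℝ), 0 ≤ ρ →
      Integrable (fun z : ℝ × ℝ => moreau ν (c * z.1 + γ * z.2) ρ)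
        ((gaussianReal 0 1).prod Pβ))
    (hνcont : ContinuousOn
      (fun q : ℝ × ℝ =>
        ∫ z, moreau ν (q.1 * z.1 + γ * z.2) q.2 ∂((gaussianReal 0 1).prod Pβ))
      (Set.univ ×ˢ Set.Ici 0))
    (hνconj : ConjDerivAssumption γ Pβ ν)
    (Cβ0 Cu C₁ C₂ cη Cη : ℝ)
    (hCβ0 : 0 < Cβ0) (hCu : 0 < Cu) (hC₁ : 0 < C₁) (hC₂ : 0 < C₂)
    (hcη : 0 < cη) (hcηCη : cη < Cη)
    (hcη' : cη < Real.sqrt ((1 / 2) * min (τ ^ 2) ((1 - τ) ^ 2)))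
    -- the unique minimizer (β₀*, M_u*, ρ₁*) of the asymptotic program has M_u* > 0
    (hMu : ∀ p ∈ asymBox Cβ0 Cu C₁,
      IsMinOn (asymFmax τ γ Pε Pβ ν cη Cη C₂) (asymBox Cβ0 Cu C₁) p → 0 < p.2.1) :
    ∃! Mη : ℝ, Mη ∈ Set.Icc cη Cη ∧
      IsMaxOn (asymG τ γ Pε Pβ ν Cβ0 Cu C₁ C₂) (Set.Icc cη Cη) Mη := by
  have hmin := hν.hasMinorant
  have hP := hPε.second_moment
  have hγ0 : 0 < γ := hγ.1
  have hYpos : ∀ y ∈ Set.Icc cη Cη ×ˢ Set.Ioc (0 : ℝ) C₂, 0 < y.1 ∧ 0 < y.2 :=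
    fun y hy => ⟨lt_of_lt_of_le hcη hy.1.1, hy.2.1⟩
  have hbox : asymBox Cβ0 Cu C₁ = Set.Icc (-Cβ0) Cβ0 ×ˢ Set.Icc (0 : ℝ) Cu ×ˢ Set.Icc (0 : ℝ) C₁ :=
    rfl
  have hXpos : ∀ p ∈ asymBox Cβ0 Cu C₁, 0 ≤ p.2.1 ∧ 0 ≤ p.2.2 :=
    fun p hp => ⟨hp.2.1.1, hp.2.2.1⟩
  have hXv : Convex ℝ (asymBox Cβ0 Cu C₁) :=
    (convex_Icc _ _).prod ((convex_Icc _ _).prod (convex_Icc _ _))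
  have hYv : Convex ℝ (Set.Icc cη Cη ×ˢ Set.Ioc (0 : ℝ) C₂) := (convex_Icc _ _).prod (convex_Ioc _ _)
  have hobj : ∀ p ∈ asymBox Cβ0 Cu C₁, ∀ y ∈ Set.Icc cη Cη ×ˢ Set.Ioc (0 : ℝ) C₂,
      asymObj τ γ Pε Pβ ν p.1 p.2.1 p.2.2 y.1 y.2 =
        Tfun τ Pε p.1 p.2.1 (p.2.2 / y.1) + γ * KK γ Pβ ν p.2.1 y.1 y.2 + y.1 * p.2.2 / 2
          - p.2.1 * y.2 / 2 := by
    intro p hp y hy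
    rw [KK_eq hνfin _ (hXpos p hp).1 (hYpos y hy).2]
    unfold asymObj Tfun
    ring
  refine abstract_unique (asymBox Cβ0 Cu C₁)
    (isCompact_Icc.prod (isCompact_Icc.prod isCompact_Icc)) hXv
    ⟨(0, 0, 0), ⟨by constructor <;> simp [hCβ0.le], ⟨le_rfl, hCu.le⟩, le_rfl, hC₁.le⟩⟩
    cη Cη C₂ hcηCη hC₂ (fun p y => asymObj τ γ Pε Pβ ν p.1 p.2.1 p.2.2 y.1 y.2) ?_ ?_ ?_ ?_ ?_ ?_
  · -- continuity in the maximization variables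
    intro p hp
    have hT : ContinuousOn (fun y : ℝ × ℝ => Tfun τ Pε p.1 p.2.1 (p.2.2 / y.1))
        (Set.Icc cη Cη ×ˢ Set.Ioc (0 : ℝ) C₂) := by
      refine (T_cont hτ hP).comp (f := fun y : ℝ × ℝ => (p.1, p.2.1, p.2.2 / y.1)) ?_ ?_
      · refine continuousOn_const.prodMk (continuousOn_const.prodMk ?_)
        exact continuousOn_const.div continuousOn_fst fun y hy => (hYpos y hy).1.ne'
      · intro y hy
        exact div_nonneg (hXpos p hp).2 (hYpos y hy).1.le
    have hK := hνcont.comp (s := Set.Icc cη Cη ×ˢ Set.Ioc (0 : ℝ) C₂)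
      (f := fun y : ℝ × ℝ => (y.1 * p.2.1 / y.2, p.2.1 / y.2)) (by
        refine ContinuousOn.prodMk ?_ ?_
        · exact (continuousOn_fst.mul continuousOn_const).div continuousOn_snd
            fun y hy => (hYpos y hy).2.ne'
        · exact continuousOn_const.div continuousOn_snd fun y hy => (hYpos y hy).2.ne')
      (fun y hy => ⟨Set.mem_univ _, div_nonneg (hXpos p hp).1 (hYpos y hy).2.le⟩)
    have hD : ContinuousOn (fun y : ℝ × ℝ => y.1 ^ 2 * p.2.1 * γ / (2 * y.2))
        (Set.Icc cη Cη ×ˢ Set.Ioc (0 : ℝ) C₂) := by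
      refine ContinuousOn.div (by fun_prop) (by fun_prop) fun y hy => ?_
      have := (hYpos y hy).2
      positivity
    exact ((((hT.sub hD).add (hK.const_smul γ)).add
      (by fun_prop : ContinuousOn (fun y : ℝ × ℝ => y.1 * p.2.2 / 2) _)).sub
      (by fun_prop : ContinuousOn (fun y : ℝ × ℝ => p.2.1 * y.2 / 2) _))
  · -- concavity in the maximization variables
    intro p hp
    refine ⟨hYv, fun y hy z hz a b ha hb hab => ?_⟩
    have hw := hYv hy hz ha hb hab
    have hwp := hYpos _ hw
    beta_reduce
    rw [hobj p hp y hy, hobj p hp z hz, hobj p hp _ hw]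
    simp only [Prod.fst_add, Prod.snd_add, Prod.smul_fst, Prod.smul_snd, smul_eq_mul] at hwp ⊢
    have h1 := T_concave hτ hP p.1 p.2.1 (hXpos p hp).2 (hYpos y hy).1 (hYpos z hz).1 hwp.1 ha hb hab
    have h2 := mul_le_mul_of_nonneg_left (KK_concave hmin hνfin (M := y.1) (N := z.1)
      (hXpos p hp).1 (hYpos y hy).2 (hYpos z hz).2 hwp.2 ha hb hab) hγ0.le
    linarith
  · -- continuity in the minimization variables
    intro y hy
    have hT : ContinuousOn (fun p : ℝ × ℝ × ℝ => Tfun τ Pε p.1 p.2.1 (p.2.2 / y.1))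
        (asymBox Cβ0 Cu C₁) := by
      refine (T_cont hτ hP).comp (f := fun p : ℝ × ℝ × ℝ => (p.1, p.2.1, p.2.2 / y.1)) ?_ ?_
      · fun_prop
      · intro p hp
        exact div_nonneg (hXpos p hp).2 (hYpos y hy).1.le
    have hK := hνcont.comp (s := asymBox Cβ0 Cu C₁)
      (f := fun p : ℝ × ℝ × ℝ => (y.1 * p.2.1 / y.2, p.2.1 / y.2)) (by fun_prop)
      (fun p hp => ⟨Set.mem_univ _, div_nonneg (hXpos p hp).1 (hYpos y hy).2.le⟩)
    exact ((((hT.sub (by fun_prop : ContinuousOn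
        (fun p : ℝ × ℝ × ℝ => y.1 ^ 2 * p.2.1 * γ / (2 * y.2)) _)).add (hK.const_smul γ)).add
      (by fun_prop : ContinuousOn (fun p : ℝ × ℝ × ℝ => y.1 * p.2.2 / 2) _)).sub
      (by fun_prop : ContinuousOn (fun p : ℝ × ℝ × ℝ => p.2.1 * y.2 / 2) _))
  · -- convexity in the minimization variables
    intro y hy
    refine ⟨hXv, fun p hp q hq a b ha hb hab => ?_⟩
    have hw := hXv hp hq ha hb hab
    simp only
    rw [hobj p hp y hy, hobj q hq y hy, hobj _ hw y hy]
    simp only [Prod.fst_add, Prod.snd_add, Prod.smul_fst, Prod.smul_snd, smul_eq_mul]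
    have h1 := T_convex hτ hP (β := p.1) (u := p.2.1) (β' := q.1) (u' := q.2.1)
      (div_nonneg (hXpos p hp).2 (hYpos y hy).1.le)
      (div_nonneg (hXpos q hq).2 (hYpos y hy).1.le) ha hb hab
    have e1 : a * (p.2.2 / y.1) + b * (q.2.2 / y.1) = (a * p.2.2 + b * q.2.2) / y.1 := by ring
    rw [e1] at h1
    have h2 := mul_le_mul_of_nonneg_left (KK_convex hν hνfin (M := y.1)
      (hXpos p hp).1 (hXpos q hq).1 (hYpos y hy).2 ha hb hab) hγ0.le
    linarith
  · -- boundedness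
    intro p hp
    refine ⟨Tfun τ Pε p.1 p.2.1 0 + γ * (∫ z, ν (γ * z.2) ∂((gaussianReal 0 1).prod Pβ)) +
      Cη * p.2.2 / 2, ?_⟩
    rintro _ ⟨y, hy, rfl⟩
    simp only
    rw [hobj p hp y hy]
    have h1 := T_mono hτ hP p.1 p.2.1 (div_nonneg (hXpos p hp).2 (hYpos y hy).1.le)
    have h2 := mul_le_mul_of_nonneg_left (KK_bdd hmin hνfin y.1 (hXpos p hp).1 (hYpos y hy).2) hγ0.le
    have h3 := mul_le_mul_of_nonneg_right hy.1.2 (hXpos p hp).2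
    have h4 := mul_nonneg (hXpos p hp).1 (hYpos y hy).2.le
    linarith
  · -- uniqueness
    intro p hp hpm M hM N hN hMN V hV hVM hVN
    have hu : 0 < p.2.1 := hMu p hp hpm
    have hM0 : 0 < M := lt_of_lt_of_le hcη hM.1
    simp only at hV hVM hVN
    rcases (hXpos p hp).2.eq_or_lt with h0 | h0
    · obtain ⟨δ, hδ, hK⟩ := KK_strict hν hPβ2 hνfin hνconj hu hC₂ hM0 hMN
      obtain ⟨ρ, hρ, h1⟩ := hVN (γ * δ) (by positivity)
      have h2 := hV (M, ρ) ⟨hM, hρ⟩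
      rw [hobj p hp (N, ρ) ⟨hN, hρ⟩] at h1
      rw [hobj p hp (M, ρ) ⟨hM, hρ⟩] at h2
      have h3 := mul_le_mul_of_nonneg_left (hK ρ hρ) hγ0.le
      simp only [← h0, zero_div, mul_zero] at h1 h2
      linarith
    · have hs := T_strict hτ hPε p.1 hu.le h0 hM0 hMN
      set δ := Tfun τ Pε p.1 p.2.1 (p.2.2 / (1 / 2 * M + 1 / 2 * N)) -
        (1 / 2 * Tfun τ Pε p.1 p.2.1 (p.2.2 / M) + 1 / 2 * Tfun τ Pε p.1 p.2.1 (p.2.2 / N)) with hδ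
      have hδ0 : 0 < δ := sub_pos.2 hs
      obtain ⟨ρ, hρ, h1⟩ := hVM δ hδ0
      obtain ⟨σ, hσ, h2⟩ := hVN δ hδ0
      have hw := hYv (x := (M, ρ)) ⟨hM, hρ⟩ (y := (N, σ)) ⟨hN, hσ⟩ (a := 1 / 2) (b := 1 / 2)
        (by norm_num) (by norm_num) (by norm_num)
      have h3 := hV _ hw
      have hwp := hYpos _ hw
      rw [hobj p hp _ hw] at h3
      rw [hobj p hp (M, ρ) ⟨hM, hρ⟩] at h1
      rw [hobj p hp (N, σ) ⟨hN, hσ⟩] at h2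
      simp only [Prod.fst_add, Prod.snd_add, Prod.smul_fst, Prod.smul_snd, smul_eq_mul] at hwp h1 h2 h3
      have h4 := mul_le_mul_of_nonneg_left (KK_concave hmin hνfin (M := M) (N := N)
        hu.le hρ.1 hσ.1 hwp.2 (by norm_num) (by norm_num) (by norm_num)) hγ0.le
      linarith

end
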